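/- Let ω : ℝ → ℝ be Lipschitz and bounded. For Y > sup ω, set R_Y := {y ∈ ℝ² : ω(y₁) < y₂ < Y}, and say that property (K_Y) holds if there exists C_Y > 0 such that every smooth vector field u : closure(R_Y) → ℝ² with ∫_{R_Y}(|u|²+|∇u|²) < ∞ and u·ν = 0 on Γ satisfies ∫_{R_Y} |u|² ≤ C_Y ∫_{R_Y} |D(u)|². If (K_{Y₀}) holds for some Y₀ > sup ω, then (K_Y) holds for every Y > sup ω. -/

import Mathlib

open MeasureTheory Real Set Filter

noncomputable section

/-- The layer `R_Y = {y : ω(y₁) < y₂ < Y}`. -/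
def layerRY (ω : ℝ → ℝ) (Y : ℝ) : Set (ℝ × ℝ) := {y : ℝ × ℝ | ω y.1 < y.2 ∧ y.2 < Y}

/-- Squared Euclidean norm of a vector of `ℝ²`. -/
def vsq (w : ℝ × ℝ) : ℝ := w.1 ^ 2 + w.2 ^ 2

/-- Squared Frobenius norm of the full gradient `∇u`. -/
def gradSq (u : ℝ × ℝ → ℝ × ℝ) (y : ℝ × ℝ) : ℝ :=
  vsq (fderiv ℝ u y (1, 0)) + vsq (fderiv ℝ u y (0, 1))

/-- Squared Frobenius norm of the symmetric gradient `D(u) = (∇u + (∇u)ᵀ)/2`. -/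
def symmGradSq (u : ℝ × ℝ → ℝ × ℝ) (y : ℝ × ℝ) : ℝ :=
  (fderiv ℝ u y (1, 0)).1 ^ 2 + (fderiv ℝ u y (0, 1)).2 ^ 2 +
    2 * (((fderiv ℝ u y (1, 0)).2 + (fderiv ℝ u y (0, 1)).1) / 2) ^ 2

/-- The tangency condition `u · ν = 0` on `Γ = {y₂ = ω(y₁)}`. -/
def TangentOn (ω : ℝ → ℝ) (u : ℝ × ℝ → ℝ × ℝ) : Prop :=
  ∀ᵐ y₁ ∂(volume : Measure ℝ),
    (u (y₁, ω y₁)).1 * (-(deriv ω y₁)) + (u (y₁, ω y₁)).2 = 0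

/-- Property `(K_Y)`: a uniform Korn-type inequality
`∫_{R_Y} |u|² ≤ C_Y ∫_{R_Y} |D(u)|²` holds for all smooth vector fields with finite
`H¹(R_Y)` norm that are tangent to `Γ`. -/
def KornProp (ω : ℝ → ℝ) (Y : ℝ) : Prop :=
  ∃ C > 0, ∀ u : ℝ × ℝ → ℝ × ℝ, ContDiff ℝ (⊤ : ℕ∞) u →
    IntegrableOn (fun y => vsq (u y) + gradSq u y) (layerRY ω Y) volume →
    TangentOn ω u →
    (∫ y in layerRY ω Y, vsq (u y)) ≤ C * ∫ y in layerRY ω Y, symmGradSq u y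

theorem sq_sub_le_lintegral_deriv_sq {φ φ' : ℝ → ℝ} (h : ∀ t, HasDerivAt φ (φ' t) t)
    (hc : Continuous φ') :
    ENNReal.ofReal ((φ 1 - φ 0) ^ 2) ≤ ∫⁻ t in Icc (0 : ℝ) 1, ENNReal.ofReal (φ' t ^ 2) := by
  have hsub : (∫ t in (0 : ℝ)..1, φ' t) = φ 1 - φ 0 :=
    intervalIntegral.integral_eq_sub_of_hasDerivAt (fun t _ => h t) (hc.intervalIntegrable _ _)
  set m := φ 1 - φ 0 with hm
  have hnn : 0 ≤ ∫ t in (0 : ℝ)..1, (φ' t - m) ^ 2 :=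
    intervalIntegral.integral_nonneg zero_le_one (fun t _ => sq_nonneg _)
  have hexp : (∫ t in (0 : ℝ)..1, (φ' t - m) ^ 2) =
      (∫ t in (0 : ℝ)..1, φ' t ^ 2) - 2 * m * m + m ^ 2 := by
    have : (fun t => (φ' t - m) ^ 2) = fun t => φ' t ^ 2 - 2 * m * φ' t + m ^ 2 := by
      funext t; ring
    rw [this, intervalIntegral.integral_add, intervalIntegral.integral_sub,
      intervalIntegral.integral_const_mul, hsub]
    · simp
    all_goals exact Continuous.intervalIntegrable (by fun_prop) _ _
  have hle : m ^ 2 ≤ ∫ t in (0 : ℝ)..1, φ' t ^ 2 := by nlinarith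
  have hc2 : Continuous fun t => φ' t ^ 2 := hc.pow 2
  rw [← ofReal_integral_eq_lintegral_ofReal
    (hc2.continuousOn.integrableOn_compact isCompact_Icc)
    (Eventually.of_forall fun t => sq_nonneg _)]
  apply ENNReal.ofReal_le_ofReal
  rwa [intervalIntegral.integral_of_le zero_le_one, ← integral_Icc_eq_integral_Ioc] at hle

theorem isOpen_layerRY {ω : ℝ → ℝ} (hω : Continuous ω) (Y : ℝ) : IsOpen (layerRY ω Y) :=
  (isOpen_lt (hω.comp continuous_fst) continuous_snd).inter
    (isOpen_lt continuous_snd continuous_const)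

theorem vsq_nonneg (w : ℝ × ℝ) : 0 ≤ vsq w := by unfold vsq; positivity

theorem gradSq_nonneg (u : ℝ × ℝ → ℝ × ℝ) (y : ℝ × ℝ) : 0 ≤ gradSq u y :=
  add_nonneg (vsq_nonneg _) (vsq_nonneg _)

theorem symmGradSq_nonneg (u : ℝ × ℝ → ℝ × ℝ) (y : ℝ × ℝ) : 0 ≤ symmGradSq u y := by
  unfold symmGradSq; positivity

theorem symmGradSq_le_gradSq (u : ℝ × ℝ → ℝ × ℝ) (y : ℝ × ℝ) : symmGradSq u y ≤ gradSq u y := by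
  unfold symmGradSq gradSq vsq
  nlinarith [sq_nonneg ((fderiv ℝ u y (1, 0)).2 - (fderiv ℝ u y (0, 1)).1)]

theorem continuous_fderiv_apply_of_smooth {u : ℝ × ℝ → ℝ × ℝ} (hu : ContDiff ℝ (⊤ : ℕ∞) u)
    (w : ℝ × ℝ) : Continuous fun y => fderiv ℝ u y w :=
  (hu.continuous_fderiv (by simp)).clm_apply continuous_const

theorem continuous_vsq_comp {u : ℝ × ℝ → ℝ × ℝ} (hu : ContDiff ℝ (⊤ : ℕ∞) u) :
    Continuous fun y => vsq (u y) := by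
  have := hu.continuous
  unfold vsq; fun_prop

theorem continuous_gradSq {u : ℝ × ℝ → ℝ × ℝ} (hu : ContDiff ℝ (⊤ : ℕ∞) u) :
    Continuous (gradSq u) := by
  have h1 := continuous_fderiv_apply_of_smooth hu (1, 0)
  have h2 := continuous_fderiv_apply_of_smooth hu (0, 1)
  unfold gradSq vsq; fun_prop

theorem continuous_symmGradSq {u : ℝ × ℝ → ℝ × ℝ} (hu : ContDiff ℝ (⊤ : ℕ∞) u) :
    Continuous (symmGradSq u) := by
  have h1 := continuous_fderiv_apply_of_smooth hu (1, 0)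
  have h2 := continuous_fderiv_apply_of_smooth hu (0, 1)
  unfold symmGradSq; fun_prop

theorem hasDerivAt_comp_curve {u : ℝ × ℝ → ℝ × ℝ} (hu : ContDiff ℝ (⊤ : ℕ∞) u)
    {γ : ℝ → ℝ × ℝ} {γ' : ℝ × ℝ} {t : ℝ} (hγ : HasDerivAt γ γ' t) :
    HasDerivAt (fun s => u (γ s)) (fderiv ℝ u (γ t) γ') t :=
  ((hu.differentiable (by simp)) (γ t)).hasFDerivAt.comp_hasDerivAt t hγ

theorem lintegral_comp_snd_le {g g' : ℝ → ℝ} {c : ℝ} (hc : 0 < c)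
    (hg : ∀ y, HasDerivAt g (g' y) y) (hcg : ∀ y, c ≤ g' y)
    {F : ℝ × ℝ → ENNReal} (hF : Measurable F) :
    ∫⁻ p : ℝ × ℝ, F (p.1, g p.2) ≤ ENNReal.ofReal c⁻¹ * ∫⁻ p, F p := by
  have hgc : Continuous g := continuous_iff_continuousAt.2 fun y => (hg y).continuousAt
  have hinj : Function.Injective g := (strictMono_of_hasDerivAt_pos hg
    fun y => hc.trans_le (hcg y)).injective
  have hm : Measurable fun p : ℝ × ℝ => F (p.1, g p.2) := hF.comp (by fun_prop)
  rw [Measure.volume_eq_prod, lintegral_prod _ hm.aemeasurable, lintegral_prod _ hF.aemeasurable,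
    ← lintegral_const_mul _ hF.lintegral_prod_right']
  refine lintegral_mono fun x => ?_
  have hFx : Measurable fun y => F (x, y) := hF.comp (by fun_prop)
  have hgx : Measurable fun y => F (x, g y) := hFx.comp hgc.measurable
  have key := lintegral_image_eq_lintegral_abs_deriv_mul (s := univ) MeasurableSet.univ
    (fun y _ => (hg y).hasDerivWithinAt) hinj.injOn (fun y => F (x, y))
  rw [setLIntegral_univ] at key
  calc ∫⁻ y, F (x, g y)
      = ENNReal.ofReal c⁻¹ * ∫⁻ y, ENNReal.ofReal c * F (x, g y) := by
        rw [lintegral_const_mul _ hgx, ← mul_assoc, ← ENNReal.ofReal_mul (by positivity),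
          inv_mul_cancel₀ hc.ne', ENNReal.ofReal_one, one_mul]
    _ ≤ ENNReal.ofReal c⁻¹ * ∫⁻ y, ENNReal.ofReal |g' y| * F (x, g y) := by
        gcongr with y
        exact (hcg y).trans (le_abs_self _)
    _ ≤ ENNReal.ofReal c⁻¹ * ∫⁻ y, F (x, y) := by
        rw [← key]
        gcongr
        exact Measure.restrict_le_self

theorem setLIntegral_comp_le {S T : Set (ℝ × ℝ)} (hS : MeasurableSet S) (hT : MeasurableSet T)
    {Φ : ℝ × ℝ → ℝ × ℝ} {k : ENNReal}
    (hk : ∀ F : ℝ × ℝ → ENNReal, Measurable F → ∫⁻ p, F (Φ p) ≤ k * ∫⁻ p, F p)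
    (hST : MapsTo Φ S T) {F : ℝ × ℝ → ENNReal} (hF : Measurable F) :
    ∫⁻ p in S, F (Φ p) ≤ k * ∫⁻ p in T, F p := by
  rw [← lintegral_indicator hS, ← lintegral_indicator hT]
  refine le_trans (lintegral_mono fun p => ?_) (hk _ (hF.indicator hT))
  by_cases hp : p ∈ S
  · simp [hp, hST hp]
  · simp [hp]

/-- The inequality of `KornProp` with Lebesgue integrals in `[0, ∞]`. -/
def LKornProp (ω : ℝ → ℝ) (Y : ℝ) : Prop :=
  ∃ C : NNReal, ∀ u : ℝ × ℝ → ℝ × ℝ, ContDiff ℝ (⊤ : ℕ∞) u →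
    ∫⁻ y in layerRY ω Y, ENNReal.ofReal (vsq (u y) + gradSq u y) ≠ ⊤ →
    TangentOn ω u →
    ∫⁻ y in layerRY ω Y, ENNReal.ofReal (vsq (u y)) ≤
      C * ∫⁻ y in layerRY ω Y, ENNReal.ofReal (symmGradSq u y)

theorem integrableOn_iff_lintegral {u : ℝ × ℝ → ℝ × ℝ} (hu : ContDiff ℝ (⊤ : ℕ∞) u)
    (S : Set (ℝ × ℝ)) :
    IntegrableOn (fun y => vsq (u y) + gradSq u y) S volume ↔
      ∫⁻ y in S, ENNReal.ofReal (vsq (u y) + gradSq u y) ≠ ⊤ := by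
  have hc := (continuous_vsq_comp hu).add (continuous_gradSq hu)
  exact (lintegral_ofReal_ne_top_iff_integrable hc.aestronglyMeasurable
    (Eventually.of_forall fun y => add_nonneg (vsq_nonneg _) (gradSq_nonneg _ _))).symm

theorem ofReal_setIntegral_vsq_and_symmGradSq {u : ℝ × ℝ → ℝ × ℝ} (hu : ContDiff ℝ (⊤ : ℕ∞) u)
    {S : Set (ℝ × ℝ)} (h : IntegrableOn (fun y => vsq (u y) + gradSq u y) S volume) :
    ENNReal.ofReal (∫ y in S, vsq (u y)) = ∫⁻ y in S, ENNReal.ofReal (vsq (u y)) ∧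
    ENNReal.ofReal (∫ y in S, symmGradSq u y) = ∫⁻ y in S, ENNReal.ofReal (symmGradSq u y) := by
  constructor
  · refine ofReal_integral_eq_lintegral_ofReal
      (h.mono' (continuous_vsq_comp hu).aestronglyMeasurable
      (Eventually.of_forall fun y => ?_)) (Eventually.of_forall fun y => vsq_nonneg _)
    rw [Real.norm_of_nonneg (vsq_nonneg _)]
    exact le_add_of_nonneg_right (gradSq_nonneg _ _)
  · refine ofReal_integral_eq_lintegral_ofReal
      (h.mono' (continuous_symmGradSq hu).aestronglyMeasurable
      (Eventually.of_forall fun y => ?_)) (Eventually.of_forall fun y => symmGradSq_nonneg _ _)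
    rw [Real.norm_of_nonneg (symmGradSq_nonneg _ _)]
    exact (symmGradSq_le_gradSq _ _).trans (le_add_of_nonneg_left (vsq_nonneg _))

theorem kornProp_iff_lKornProp (ω : ℝ → ℝ) (Y : ℝ) : KornProp ω Y ↔ LKornProp ω Y := by
  constructor
  · rintro ⟨C, hC, h⟩
    refine ⟨C.toNNReal, fun u hu hfin htan => ?_⟩
    have hint := (integrableOn_iff_lintegral hu _).2 hfin
    obtain ⟨h1, h2⟩ := ofReal_setIntegral_vsq_and_symmGradSq hu hint
    rw [← h1, ← h2]
    exact (ENNReal.ofReal_le_ofReal (h u hu hint htan)).trans (ENNReal.ofReal_mul hC.le).le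
  · rintro ⟨C, h⟩
    refine ⟨C + 1, by positivity, fun u hu hint htan => ?_⟩
    have hfin := (integrableOn_iff_lintegral hu _).1 hint
    have hmain := h u hu hfin htan
    obtain ⟨h1, h2⟩ := ofReal_setIntegral_vsq_and_symmGradSq hu hint
    have hJ : 0 ≤ ∫ y in layerRY ω Y, symmGradSq u y :=
      integral_nonneg fun y => symmGradSq_nonneg _ _
    rw [← h1, ← h2, ← ENNReal.ofReal_coe_nnreal, ← ENNReal.ofReal_mul C.coe_nonneg,
      ENNReal.ofReal_le_ofReal_iff (by positivity)] at hmain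
    linarith

theorem hasDerivAt_fst_comp_curve {u : ℝ × ℝ → ℝ × ℝ} (hu : ContDiff ℝ (⊤ : ℕ∞) u)
    {γ : ℝ → ℝ × ℝ} {γ' : ℝ × ℝ} {t : ℝ} (hγ : HasDerivAt γ γ' t) :
    HasDerivAt (fun s => (u (γ s)).1) (fderiv ℝ u (γ t) γ').1 t :=
  (ContinuousLinearMap.fst ℝ ℝ ℝ).hasFDerivAt.comp_hasDerivAt t (hasDerivAt_comp_curve hu hγ)

theorem hasDerivAt_snd_comp_curve {u : ℝ × ℝ → ℝ × ℝ} (hu : ContDiff ℝ (⊤ : ℕ∞) u)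
    {γ : ℝ → ℝ × ℝ} {γ' : ℝ × ℝ} {t : ℝ} (hγ : HasDerivAt γ γ' t) :
    HasDerivAt (fun s => (u (γ s)).2) (fderiv ℝ u (γ t) γ').2 t :=
  (ContinuousLinearMap.snd ℝ ℝ ℝ).hasFDerivAt.comp_hasDerivAt t (hasDerivAt_comp_curve hu hγ)

theorem setLIntegral_path_le {S T : Set (ℝ × ℝ)} (hS : MeasurableSet S) (hT : MeasurableSet T)
    {Φ : ℝ → ℝ × ℝ → ℝ × ℝ} (hΦ : Continuous (Function.uncurry Φ)) {k : ENNReal}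
    (hk : ∀ s ∈ Icc (0 : ℝ) 1, ∀ F : ℝ × ℝ → ENNReal, Measurable F →
      ∫⁻ p, F (Φ s p) ≤ k * ∫⁻ p, F p)
    (hST : ∀ s ∈ Icc (0 : ℝ) 1, MapsTo (Φ s) S T)
    {F : ℝ × ℝ → ENNReal} (hF : Measurable F) :
    ∫⁻ p in S, ∫⁻ s in Icc (0 : ℝ) 1, F (Φ s p) ≤ k * ∫⁻ p in T, F p := by
  have hm : Measurable (Function.uncurry fun (p : ℝ × ℝ) (s : ℝ) => F (Φ s p)) :=
    hF.comp (hΦ.comp continuous_swap).measurable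
  rw [lintegral_lintegral_swap hm.aemeasurable]
  calc ∫⁻ s in Icc (0 : ℝ) 1, ∫⁻ p in S, F (Φ s p)
      ≤ ∫⁻ s in Icc (0 : ℝ) 1, k * ∫⁻ p in T, F p :=
        setLIntegral_mono measurable_const fun s hs =>
          setLIntegral_comp_le hS hT (hk s hs) (hST s hs) hF
    _ = k * ∫⁻ p in T, F p := by simp

theorem symmGradSq_controls_directional (u : ℝ × ℝ → ℝ × ℝ) (q : ℝ × ℝ) (k : ℝ) :
    (k * (fderiv ℝ u q (k, 1)).1 + (fderiv ℝ u q (k, 1)).2) ^ 2 ≤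
      (k ^ 2 + 1) ^ 2 * symmGradSq u q := by
  have : ((k, 1) : ℝ × ℝ) = k • (1, 0) + (0, 1) := by simp
  rw [this, map_add, map_smul]
  unfold symmGradSq
  simp only [Prod.fst_add, Prod.snd_add, Prod.smul_fst, Prod.smul_snd, smul_eq_mul]
  generalize (fderiv ℝ u q (1, 0)).1 = a
  generalize (fderiv ℝ u q (1, 0)).2 = b
  generalize (fderiv ℝ u q (0, 1)).1 = c
  generalize (fderiv ℝ u q (0, 1)).2 = d
  nlinarith [sq_nonneg (k ^ 2 * d - a), sq_nonneg (k * a - (b + c) / 2 * k ^ 2),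
    sq_nonneg (k * d - (b + c) / 2)]

/-- On a layer of height `d` above level `Z`, the component of `u` in the direction `(k, 1)` is
controlled through the segments parallel to `(k, 1)`. -/
theorem setLIntegral_directional_sq_le {ω : ℝ → ℝ} (hω : Continuous ω) {M Z d : ℝ}
    (hM : ∀ t, ω t ≤ M) (hd : 0 < d) (hZ : M + d < Z)
    {u : ℝ × ℝ → ℝ × ℝ} (hu : ContDiff ℝ (⊤ : ℕ∞) u) (k : ℝ) :
    ∫⁻ p in layerRY ω (Z + d) ∩ {p | Z ≤ p.2},
        ENNReal.ofReal ((k * (u p).1 + (u p).2) ^ 2) ≤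
      ENNReal.ofReal (2 * (k ^ 2 + 1)) * (∫⁻ p in layerRY ω Z, ENNReal.ofReal (vsq (u p))) +
      ENNReal.ofReal (2 * d ^ 2 * (k ^ 2 + 1) ^ 2) *
        ∫⁻ p in layerRY ω (Z + d), ENNReal.ofReal (symmGradSq u p) := by
  set S := layerRY ω (Z + d) ∩ {p | Z ≤ p.2} with hSdef
  have hS : MeasurableSet S := (isOpen_layerRY hω _).measurableSet.inter
    (isClosed_le continuous_const continuous_snd).measurableSet
  let Φ : ℝ → ℝ × ℝ → ℝ × ℝ := fun s p => p - ((1 - s) * d) • ((k, 1) : ℝ × ℝ)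
  have hΦ : Continuous (Function.uncurry Φ) := by
    simp only [Φ, Function.uncurry_def]; fun_prop
  have htrans : ∀ s, ∀ F : ℝ × ℝ → ENNReal, Measurable F →
      ∫⁻ p, F (Φ s p) ≤ 1 * ∫⁻ p, F p := fun s F _ => by
    rw [one_mul]; exact (lintegral_sub_right_eq_self F _).le
  have hV : Measurable fun p => ENNReal.ofReal (vsq (u p)) :=
    (continuous_vsq_comp hu).measurable.ennreal_ofReal
  have hE : Measurable fun p => ENNReal.ofReal (symmGradSq u p) :=
    (continuous_symmGradSq hu).measurable.ennreal_ofReal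
  have hmaps0 : MapsTo (Φ 0) S (layerRY ω Z) := by
    rintro p ⟨⟨h1, h2⟩, h3⟩
    simp only [mem_ofPred_eq] at h3
    refine ⟨?_, ?_⟩ <;> simp [Φ]
    · linarith [hM (p.1 - d * k)]
    · linarith
  have hmaps : ∀ s ∈ Icc (0 : ℝ) 1, MapsTo (Φ s) S (layerRY ω (Z + d)) := by
    rintro s ⟨hs0, hs1⟩ p ⟨⟨h1, h2⟩, h3⟩
    simp only [mem_ofPred_eq] at h3
    refine ⟨?_, ?_⟩ <;> simp [Φ]
    · nlinarith [hM (p.1 - (1 - s) * d * k)]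
    · nlinarith
  have hpt : ∀ p, ENNReal.ofReal ((k * (u p).1 + (u p).2) ^ 2) ≤
      ENNReal.ofReal (2 * (k ^ 2 + 1)) * ENNReal.ofReal (vsq (u (Φ 0 p))) +
      ENNReal.ofReal (2 * d ^ 2 * (k ^ 2 + 1) ^ 2) *
        ∫⁻ s in Icc (0 : ℝ) 1, ENNReal.ofReal (symmGradSq u (Φ s p)) := by
    intro p
    let φ : ℝ → ℝ := fun s => k * (u (Φ s p)).1 + (u (Φ s p)).2
    let φ' : ℝ → ℝ := fun s =>
      d * (k * (fderiv ℝ u (Φ s p) (k, 1)).1 + (fderiv ℝ u (Φ s p) (k, 1)).2)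
    have hφ : ∀ s, HasDerivAt φ (φ' s) s := by
      intro s
      have hcurve : HasDerivAt (fun s => Φ s p) (d • ((k, 1) : ℝ × ℝ)) s := by
        have h1 : HasDerivAt (fun s : ℝ => (1 - s) * d) (-d) s := by
          simpa using ((hasDerivAt_id s).const_sub 1).mul_const d
        exact ((h1.smul_const ((k, 1) : ℝ × ℝ)).const_sub p).congr_deriv (by simp)
      refine (((hasDerivAt_fst_comp_curve hu hcurve).const_mul k).add
        (hasDerivAt_snd_comp_curve hu hcurve)).congr_deriv ?_
      rw [map_smul]
      simp only [φ', Prod.smul_fst, Prod.smul_snd, smul_eq_mul]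
      ring
    have hΦp : Continuous fun s => Φ s p := by simp only [Φ]; fun_prop
    have hφ'c : Continuous φ' := by
      have := (continuous_fderiv_apply_of_smooth hu (k, 1)).comp hΦp
      simp only [Function.comp_def] at this
      simp only [φ']; fun_prop
    have hj := sq_sub_le_lintegral_deriv_sq hφ hφ'c
    have hφ1 : φ 1 = k * (u p).1 + (u p).2 := by
      have : Φ 1 p = p := by simp only [Φ, sub_self, zero_mul, zero_smul, sub_zero]
      simp only [φ, this]
    have hφ0 : φ 0 ^ 2 ≤ (k ^ 2 + 1) * vsq (u (Φ 0 p)) := by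
      simp only [φ, vsq]
      nlinarith [sq_nonneg ((u (Φ 0 p)).1 - k * (u (Φ 0 p)).2)]
    have hj2 : ∫⁻ s in Icc (0 : ℝ) 1, ENNReal.ofReal (φ' s ^ 2) ≤
        ENNReal.ofReal (d ^ 2 * (k ^ 2 + 1) ^ 2) *
          ∫⁻ s in Icc (0 : ℝ) 1, ENNReal.ofReal (symmGradSq u (Φ s p)) := by
      rw [← lintegral_const_mul' _ _ ENNReal.ofReal_ne_top]
      refine lintegral_mono fun s => ?_
      rw [← ENNReal.ofReal_mul (by positivity)]
      apply ENNReal.ofReal_le_ofReal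
      have := symmGradSq_controls_directional u (Φ s p) k
      simp only [φ', mul_pow]
      rw [mul_assoc]
      gcongr
    rw [← hφ1]
    calc ENNReal.ofReal (φ 1 ^ 2)
        ≤ ENNReal.ofReal (2 * (k ^ 2 + 1) * vsq (u (Φ 0 p)) + 2 * (φ 1 - φ 0) ^ 2) := by
          apply ENNReal.ofReal_le_ofReal
          nlinarith [sq_nonneg (φ 1 - 2 * φ 0)]
      _ = ENNReal.ofReal (2 * (k ^ 2 + 1)) * ENNReal.ofReal (vsq (u (Φ 0 p))) +
          ENNReal.ofReal 2 * ENNReal.ofReal ((φ 1 - φ 0) ^ 2) := by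
          rw [ENNReal.ofReal_add (mul_nonneg (by positivity) (vsq_nonneg _)) (by positivity),
            ENNReal.ofReal_mul (p := 2 * (k ^ 2 + 1)) (by positivity),
            ENNReal.ofReal_mul (p := 2) (q := (φ 1 - φ 0) ^ 2) (by positivity)]
      _ ≤ _ := by
          rw [mul_assoc 2 (d ^ 2), ENNReal.ofReal_mul (p := 2) (q := d ^ 2 * (k ^ 2 + 1) ^ 2)
            (by positivity), mul_assoc (ENNReal.ofReal 2)]
          exact add_le_add le_rfl (mul_le_mul_right (hj.trans hj2) _)
  have hΦ0 : Measurable (Φ 0) := by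
    refine Continuous.measurable ?_
    simp only [Φ]; fun_prop
  calc _ ≤ ∫⁻ p in S, (ENNReal.ofReal (2 * (k ^ 2 + 1)) * ENNReal.ofReal (vsq (u (Φ 0 p))) +
      ENNReal.ofReal (2 * d ^ 2 * (k ^ 2 + 1) ^ 2) *
        ∫⁻ s in Icc (0 : ℝ) 1, ENNReal.ofReal (symmGradSq u (Φ s p))) := lintegral_mono hpt
    _ = ENNReal.ofReal (2 * (k ^ 2 + 1)) * (∫⁻ p in S, ENNReal.ofReal (vsq (u (Φ 0 p)))) +
      ENNReal.ofReal (2 * d ^ 2 * (k ^ 2 + 1) ^ 2) *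
        ∫⁻ p in S, ∫⁻ s in Icc (0 : ℝ) 1, ENNReal.ofReal (symmGradSq u (Φ s p)) := by
        have hV0 : Measurable fun p => ENNReal.ofReal (vsq (u (Φ 0 p))) := hV.comp hΦ0
        rw [lintegral_add_left (hV0.const_mul _), lintegral_const_mul _ hV0,
          lintegral_const_mul' _ _ ENNReal.ofReal_ne_top]
    _ ≤ _ := by
        refine add_le_add (mul_le_mul_right ?_ _) (mul_le_mul_right ?_ _)
        · simpa using setLIntegral_comp_le hS (isOpen_layerRY hω Z).measurableSet (htrans 0)
            hmaps0 hV
        · simpa using setLIntegral_path_le hS (isOpen_layerRY hω (Z + d)).measurableSet hΦ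
            (fun s _ => htrans s) hmaps hE

theorem setLIntegral_vsq_layer_step {ω : ℝ → ℝ} (hω : Continuous ω) {M Z d : ℝ}
    (hM : ∀ t, ω t ≤ M) (hd : 0 < d) (hZ : M + d < Z) :
    ∃ C : NNReal, ∀ u : ℝ × ℝ → ℝ × ℝ, ContDiff ℝ (⊤ : ℕ∞) u →
      ∫⁻ p in layerRY ω (Z + d), ENNReal.ofReal (vsq (u p)) ≤
        C * ((∫⁻ p in layerRY ω Z, ENNReal.ofReal (vsq (u p))) +
          ∫⁻ p in layerRY ω (Z + d), ENNReal.ofReal (symmGradSq u p)) := by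
  refine ⟨(21 + 32 * d ^ 2).toNNReal, fun u hu => ?_⟩
  have h0 := setLIntegral_directional_sq_le hω hM hd hZ hu 0
  have h1 := setLIntegral_directional_sq_le hω hM hd hZ hu 1
  set S := layerRY ω (Z + d) ∩ {p | Z ≤ p.2}
  set I := ∫⁻ p in layerRY ω Z, ENNReal.ofReal (vsq (u p))
  set J := ∫⁻ p in layerRY ω (Z + d), ENNReal.ofReal (symmGradSq u p)
  have hm : ∀ k : ℝ, Measurable fun p => ENNReal.ofReal ((k * (u p).1 + (u p).2) ^ 2) := fun k => by
    have := hu.continuous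
    exact Measurable.ennreal_ofReal (Continuous.measurable (by fun_prop))
  have hcover : layerRY ω (Z + d) ⊆ layerRY ω Z ∪ S := fun p hp =>
    (lt_or_ge p.2 Z).elim (fun h => Or.inl ⟨hp.1, h⟩) fun h => Or.inr ⟨hp, h⟩
  have hS : ∫⁻ p in S, ENNReal.ofReal (vsq (u p)) ≤
      ENNReal.ofReal 2 * (∫⁻ p in S, ENNReal.ofReal ((1 * (u p).1 + (u p).2) ^ 2)) +
      ENNReal.ofReal 3 * ∫⁻ p in S, ENNReal.ofReal ((0 * (u p).1 + (u p).2) ^ 2) := by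
    rw [← lintegral_const_mul _ (hm 1), ← lintegral_const_mul _ (hm 0),
      ← lintegral_add_left ((hm 1).const_mul _)]
    refine lintegral_mono fun p => ?_
    rw [← ENNReal.ofReal_mul (by positivity), ← ENNReal.ofReal_mul (by positivity),
      ← ENNReal.ofReal_add (by positivity) (by positivity)]
    apply ENNReal.ofReal_le_ofReal
    unfold vsq
    nlinarith [sq_nonneg ((u p).1 + 2 * (u p).2)]
  calc ∫⁻ p in layerRY ω (Z + d), ENNReal.ofReal (vsq (u p))
      ≤ ∫⁻ p in layerRY ω Z ∪ S, ENNReal.ofReal (vsq (u p)) := lintegral_mono_set hcover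
    _ ≤ I + ∫⁻ p in S, ENNReal.ofReal (vsq (u p)) := lintegral_union_le _ _ _
    _ ≤ I + (ENNReal.ofReal 2 * (ENNReal.ofReal (2 * (1 ^ 2 + 1)) * I +
          ENNReal.ofReal (2 * d ^ 2 * (1 ^ 2 + 1) ^ 2) * J) +
        ENNReal.ofReal 3 * (ENNReal.ofReal (2 * (0 ^ 2 + 1)) * I +
          ENNReal.ofReal (2 * d ^ 2 * (0 ^ 2 + 1) ^ 2) * J)) :=
        add_le_add le_rfl (hS.trans
          (add_le_add (mul_le_mul_right h1 _) (mul_le_mul_right h0 _)))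
    _ = ENNReal.ofReal 15 * I + ENNReal.ofReal (22 * d ^ 2) * J := by
        have e1 : ENNReal.ofReal 15 = 1 + ENNReal.ofReal 2 * ENNReal.ofReal (2 * (1 ^ 2 + 1)) +
            ENNReal.ofReal 3 * ENNReal.ofReal (2 * (0 ^ 2 + 1)) := by
          norm_num
        have e2 : ENNReal.ofReal (22 * d ^ 2) =
            ENNReal.ofReal 2 * ENNReal.ofReal (2 * d ^ 2 * (1 ^ 2 + 1) ^ 2) +
            ENNReal.ofReal 3 * ENNReal.ofReal (2 * d ^ 2 * (0 ^ 2 + 1) ^ 2) := by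
          rw [← ENNReal.ofReal_mul (by positivity), ← ENNReal.ofReal_mul (by positivity),
            ← ENNReal.ofReal_add (by positivity) (by positivity)]
          congr 1; ring
        rw [e1, e2]; ring
    _ ≤ ENNReal.ofReal (21 + 32 * d ^ 2) * I + ENNReal.ofReal (21 + 32 * d ^ 2) * J := by
        gcongr <;> nlinarith [sq_nonneg d]
    _ = _ := by rw [mul_add]; rfl

/-- The `L²` norm of a field on a layer is controlled by its `L²` norm on any lower layer and its
symmetric gradient. -/
theorem setLIntegral_vsq_layer_le {ω : ℝ → ℝ} (hω : Continuous ω) {M Z Y : ℝ}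
    (hM : ∀ t, ω t ≤ M) (hMZ : M < Z) (hZY : Z ≤ Y) :
    ∃ C : NNReal, ∀ u : ℝ × ℝ → ℝ × ℝ, ContDiff ℝ (⊤ : ℕ∞) u →
      ∫⁻ p in layerRY ω Y, ENNReal.ofReal (vsq (u p)) ≤
        C * ((∫⁻ p in layerRY ω Z, ENNReal.ofReal (vsq (u p))) +
          ∫⁻ p in layerRY ω Y, ENNReal.ofReal (symmGradSq u p)) := by
  have hiter : ∀ d > 0, M + d < Z → ∀ n : ℕ,
      ∃ C : NNReal, ∀ u : ℝ × ℝ → ℝ × ℝ, ContDiff ℝ (⊤ : ℕ∞) u →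
      ∫⁻ p in layerRY ω (Z + n * d), ENNReal.ofReal (vsq (u p)) ≤
        C * ((∫⁻ p in layerRY ω Z, ENNReal.ofReal (vsq (u p))) +
          ∫⁻ p in layerRY ω (Z + n * d), ENNReal.ofReal (symmGradSq u p)) := by
    intro d hd hdZ n
    induction n with
    | zero =>
      refine ⟨1, fun u _ => ?_⟩
      simp
    | succ n ih =>
      obtain ⟨C, hC⟩ := ih
      obtain ⟨C', hC'⟩ := setLIntegral_vsq_layer_step hω (Z := Z + n * d) hM hd
        (by nlinarith [mul_nonneg n.cast_nonneg hd.le (α := ℝ)])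
      refine ⟨C' * (C + 1), fun u hu => ?_⟩
      have e : Z + ((n + 1 : ℕ) : ℝ) * d = Z + n * d + d := by push_cast; ring
      rw [e]
      have hsub : layerRY ω (Z + n * d) ⊆ layerRY ω (Z + n * d + d) :=
        fun p hp => ⟨hp.1, hp.2.trans (by linarith)⟩
      set I := ∫⁻ p in layerRY ω Z, ENNReal.ofReal (vsq (u p))
      set J := ∫⁻ p in layerRY ω (Z + n * d + d), ENNReal.ofReal (symmGradSq u p)
      calc _ ≤ C' * (C * (I + J) + J) := by
            refine (hC' u hu).trans ?_
            gcongr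
            refine (hC u hu).trans ?_
            gcongr
            exact lintegral_mono_set hsub
        _ ≤ C' * (C * (I + J) + (I + J)) := by gcongr; exact le_add_self
        _ = _ := by push_cast; ring
  obtain ⟨n, hn⟩ := exists_nat_gt ((Y - Z) / (Z - M))
  have hZM : 0 < Z - M := sub_pos.2 hMZ
  have hn0 : (0 : ℝ) < n := (div_nonneg (sub_nonneg.2 hZY) hZM.le).trans_lt hn
  rcases hZY.eq_or_lt with rfl | hlt
  · refine ⟨1, fun u _ => by simp⟩
  · rw [div_lt_iff₀ hZM] at hn
    have := hiter ((Y - Z) / n) (div_pos (sub_pos.2 hlt) hn0)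
      (by rw [← lt_sub_iff_add_lt', div_lt_iff₀ hn0]; linarith) n
    rwa [mul_div_cancel₀ _ hn0.ne', add_sub_cancel] at this

/-- A smooth ramp vanishing on `(-∞, a]` with slope in `[0, θ]`, equal to `θ` on `[b, ∞)`;
`ρ` and `σ` are its first two derivatives. -/
theorem exists_smooth_ramp {a b θ : ℝ} (hab : a < b) (hθ : 0 ≤ θ) :
    ∃ η ρ σ : ℝ → ℝ, ContDiff ℝ (⊤ : ℕ∞) η ∧ ContDiff ℝ (⊤ : ℕ∞) ρ ∧ Continuous σ ∧
      (∀ y, HasDerivAt η (ρ y) y) ∧ (∀ y, HasDerivAt ρ (σ y) y) ∧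
      (∀ y, 0 ≤ ρ y) ∧ (∀ y, ρ y ≤ θ) ∧ (∀ y ≤ a, η y = 0) ∧ (∀ y ≤ a, ρ y = 0) ∧
      ∀ y ≥ b, θ * (y - b) ≤ η y := by
  set ρ : ℝ → ℝ := fun t => θ * smoothTransition ((t - a) / (b - a)) with hρdef
  have hba : 0 < b - a := sub_pos.2 hab
  have hρ : ContDiff ℝ (⊤ : ℕ∞) ρ :=
    contDiff_const.mul (smoothTransition.contDiff.comp
      ((contDiff_id.sub contDiff_const).div_const _))
  have hρc : Continuous ρ := hρ.continuous
  have hη : ∀ y, HasDerivAt (fun y => ∫ t in a..y, ρ t) (ρ y) y := fun y =>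
    intervalIntegral.integral_hasDerivAt_right (hρc.intervalIntegrable _ _)
      hρc.aestronglyMeasurable.stronglyMeasurableAtFilter hρc.continuousAt
  have hρ0 : ∀ y ≤ a, ρ y = 0 := fun y hy => by
    simp only [hρdef]
    rw [smoothTransition.zero_of_nonpos (div_nonpos_of_nonpos_of_nonneg (by linarith) hba.le),
      mul_zero]
  have hρnn : ∀ y, 0 ≤ ρ y := fun y => mul_nonneg hθ (smoothTransition.nonneg _)
  refine ⟨fun y => ∫ t in a..y, ρ t, ρ, deriv ρ, ?_, hρ, hρ.continuous_deriv (by simp), hη,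
    fun y => ((hρ.differentiable (by simp)) y).hasDerivAt, hρnn,
    fun y => mul_le_of_le_one_right hθ (smoothTransition.le_one _), ?_, hρ0, ?_⟩
  · rw [contDiff_infty_iff_deriv]
    refine ⟨fun y => (hη y).differentiableAt, ?_⟩
    rwa [show deriv (fun y => ∫ t in a..y, ρ t) = ρ from funext fun y => (hη y).deriv]
  · intro y hy
    simp only
    rw [intervalIntegral.integral_symm, neg_eq_zero]
    refine intervalIntegral.integral_zero_ae (Eventually.of_forall fun t ht => ?_)
    rw [uIoc_of_le hy] at ht
    exact hρ0 t ht.2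
  · intro y hy
    simp only
    rw [← intervalIntegral.integral_add_adjacent_intervals (hρc.intervalIntegrable a b)
      (hρc.intervalIntegrable b y)]
    have h1 : 0 ≤ ∫ t in a..b, ρ t := intervalIntegral.integral_nonneg hab.le fun t _ => hρnn t
    have h2 : ∫ t in b..y, ρ t = ∫ t in b..y, θ := by
      refine intervalIntegral.integral_congr fun t ht => ?_
      rw [uIcc_of_le hy] at ht
      simp only [hρdef]
      rw [smoothTransition.one_of_one_le, mul_one]
      rw [one_le_div hba]
      linarith [ht.1]
    rw [h2, intervalIntegral.integral_const, smul_eq_mul]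
    linarith

/-- The vertical shift `(x, y) ↦ (x, y - s η(y))`. -/
def vshift (η : ℝ → ℝ) (s : ℝ) (p : ℝ × ℝ) : ℝ × ℝ := (p.1, p.2 - s * η p.2)

/-- The pullback of `u` by `vshift η s`, as a covector field; `ρ` stands for `η'`. -/
def vpull (η ρ : ℝ → ℝ) (u : ℝ × ℝ → ℝ × ℝ) (s : ℝ) (p : ℝ × ℝ) : ℝ × ℝ :=
  ((u (vshift η s p)).1, (1 - s * ρ p.2) * (u (vshift η s p)).2)

theorem contDiff_vpull {η ρ : ℝ → ℝ} (hη : ContDiff ℝ (⊤ : ℕ∞) η) (hρ : ContDiff ℝ (⊤ : ℕ∞) ρ)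
    {u : ℝ × ℝ → ℝ × ℝ} (hu : ContDiff ℝ (⊤ : ℕ∞) u) (s : ℝ) :
    ContDiff ℝ (⊤ : ℕ∞) (vpull η ρ u s) := by
  unfold vpull vshift
  fun_prop

theorem fderiv_vpull {η ρ σ : ℝ → ℝ} (hη : ContDiff ℝ (⊤ : ℕ∞) η) (hρ : ContDiff ℝ (⊤ : ℕ∞) ρ)
    (hη' : ∀ y, HasDerivAt η (ρ y) y) (hρ' : ∀ y, HasDerivAt ρ (σ y) y)
    {u : ℝ × ℝ → ℝ × ℝ} (hu : ContDiff ℝ (⊤ : ℕ∞) u) (s : ℝ) (p : ℝ × ℝ) :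
    fderiv ℝ (vpull η ρ u s) p (1, 0) =
      ((fderiv ℝ u (vshift η s p) (1, 0)).1,
        (1 - s * ρ p.2) * (fderiv ℝ u (vshift η s p) (1, 0)).2) ∧
    fderiv ℝ (vpull η ρ u s) p (0, 1) =
      ((1 - s * ρ p.2) * (fderiv ℝ u (vshift η s p) (0, 1)).1,
        (1 - s * ρ p.2) ^ 2 * (fderiv ℝ u (vshift η s p) (0, 1)).2 -
          s * σ p.2 * (u (vshift η s p)).2) := by
  have hw := contDiff_vpull hη hρ hu s
  obtain ⟨x, y⟩ := p
  constructor
  · have hγ : HasDerivAt (fun t : ℝ => (t, y)) ((1, 0) : ℝ × ℝ) x :=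
      (hasDerivAt_id x).prodMk (hasDerivAt_const x y)
    have hγ' : HasDerivAt (fun t : ℝ => vshift η s (t, y)) ((1, 0) : ℝ × ℝ) x :=
      (hasDerivAt_id x).prodMk (hasDerivAt_const x (y - s * η y))
    exact (hasDerivAt_comp_curve hw hγ).unique
      ((hasDerivAt_fst_comp_curve hu hγ').prodMk
        ((hasDerivAt_snd_comp_curve hu hγ').const_mul (1 - s * ρ y)))
  · have hγ : HasDerivAt (fun t : ℝ => (x, t)) ((0, 1) : ℝ × ℝ) y :=
      (hasDerivAt_const y x).prodMk (hasDerivAt_id y)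
    have hγ' : HasDerivAt (fun t : ℝ => vshift η s (x, t)) ((0, 1 - s * ρ y) : ℝ × ℝ) y :=
      (hasDerivAt_const y x).prodMk ((hasDerivAt_id y).sub ((hη' y).const_mul s))
    have hm : HasDerivAt (fun t => 1 - s * ρ t) (-(s * σ y)) y :=
      ((hρ' y).const_mul s).const_sub 1
    refine ((hasDerivAt_comp_curve hw hγ).unique
      ((hasDerivAt_fst_comp_curve hu hγ').prodMk
        (hm.mul (hasDerivAt_snd_comp_curve hu hγ')))).trans ?_
    have : ((0, 1 - s * ρ y) : ℝ × ℝ) = (1 - s * ρ y) • (0, 1) := by simp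
    rw [this, map_smul]
    simp only [Prod.smul_fst, Prod.smul_snd, smul_eq_mul]
    ext <;> simp only
    ring

theorem vsq_smul_add_smul_le (q r : ℝ) (v w : ℝ × ℝ) :
    vsq (q • v + r • w) ≤ 2 * q ^ 2 * vsq v + 2 * r ^ 2 * vsq w := by
  simp only [vsq, Prod.fst_add, Prod.snd_add, Prod.smul_fst, Prod.smul_snd, smul_eq_mul]
  nlinarith [sq_nonneg (q * v.1 - r * w.1), sq_nonneg (q * v.2 - r * w.2)]

theorem fderiv_smul_add_smul {v w : ℝ × ℝ → ℝ × ℝ} (hv : ContDiff ℝ (⊤ : ℕ∞) v)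
    (hw : ContDiff ℝ (⊤ : ℕ∞) w) (q r : ℝ) (p e : ℝ × ℝ) :
    fderiv ℝ (fun p => q • v p + r • w p) p e = q • fderiv ℝ v p e + r • fderiv ℝ w p e := by
  have h : HasFDerivAt (fun p => q • v p + r • w p) (q • fderiv ℝ v p + r • fderiv ℝ w p) p :=
    (((hv.differentiable (by simp)) p).hasFDerivAt.const_smul q).add
      (((hw.differentiable (by simp)) p).hasFDerivAt.const_smul r)
  rw [h.fderiv]
  rfl

theorem gradSq_smul_add_smul_le {v w : ℝ × ℝ → ℝ × ℝ} (hv : ContDiff ℝ (⊤ : ℕ∞) v)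
    (hw : ContDiff ℝ (⊤ : ℕ∞) w) (q r : ℝ) (p : ℝ × ℝ) :
    gradSq (fun p => q • v p + r • w p) p ≤ 2 * q ^ 2 * gradSq v p + 2 * r ^ 2 * gradSq w p := by
  unfold gradSq
  rw [fderiv_smul_add_smul hv hw, fderiv_smul_add_smul hv hw]
  linarith [vsq_smul_add_smul_le q r (fderiv ℝ v p (1, 0)) (fderiv ℝ w p (1, 0)),
    vsq_smul_add_smul_le q r (fderiv ℝ v p (0, 1)) (fderiv ℝ w p (0, 1))]

theorem vsq_add_gradSq_vpull_le {η ρ σ : ℝ → ℝ} (hη : ContDiff ℝ (⊤ : ℕ∞) η)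
    (hρ : ContDiff ℝ (⊤ : ℕ∞) ρ)
    (hη' : ∀ y, HasDerivAt η (ρ y) y) (hρ' : ∀ y, HasDerivAt ρ (σ y) y)
    {u : ℝ × ℝ → ℝ × ℝ} (hu : ContDiff ℝ (⊤ : ℕ∞) u) {s : ℝ} {p : ℝ × ℝ} {B : ℝ}
    (h0 : 0 ≤ 1 - s * ρ p.2) (h1 : 1 - s * ρ p.2 ≤ 1) (hB : (s * σ p.2) ^ 2 ≤ B) :
    vsq (vpull η ρ u s p) + gradSq (vpull η ρ u s) p ≤
      (2 + 2 * B) * (vsq (u (vshift η s p)) + gradSq u (vshift η s p)) := by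
  obtain ⟨e1, e2⟩ := fderiv_vpull hη hρ hη' hρ' hu s p
  unfold gradSq
  rw [e1, e2]
  simp only [vsq, vpull]
  set m := 1 - s * ρ p.2
  have hm2 : m ^ 2 ≤ 1 := pow_le_one₀ h0 h1
  have hm4 : (m ^ 2) ^ 2 ≤ 1 := pow_le_one₀ (sq_nonneg m) hm2
  have hB0 : 0 ≤ B := (sq_nonneg _).trans hB
  generalize s * σ p.2 = k at *
  generalize (fderiv ℝ u (vshift η s p) (1, 0)).1 = a
  generalize (fderiv ℝ u (vshift η s p) (1, 0)).2 = b
  generalize (fderiv ℝ u (vshift η s p) (0, 1)).1 = c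
  generalize (fderiv ℝ u (vshift η s p) (0, 1)).2 = d
  generalize (u (vshift η s p)).1 = f
  generalize (u (vshift η s p)).2 = g
  have i1 : (m * g) ^ 2 ≤ g ^ 2 := by rw [mul_pow]; exact mul_le_of_le_one_left (sq_nonneg _) hm2
  have i2 : (m * b) ^ 2 ≤ b ^ 2 := by rw [mul_pow]; exact mul_le_of_le_one_left (sq_nonneg _) hm2
  have i3 : (m * c) ^ 2 ≤ c ^ 2 := by rw [mul_pow]; exact mul_le_of_le_one_left (sq_nonneg _) hm2
  have i4 : (m ^ 2 * d) ^ 2 ≤ d ^ 2 := by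
    rw [mul_pow]; exact mul_le_of_le_one_left (sq_nonneg _) hm4
  have i5 : (k * g) ^ 2 ≤ B * g ^ 2 := by rw [mul_pow]; gcongr
  have i6 : (m ^ 2 * d - k * g) ^ 2 ≤ 2 * (m ^ 2 * d) ^ 2 + 2 * (k * g) ^ 2 := by
    nlinarith [sq_nonneg (m ^ 2 * d + k * g)]
  have j : ∀ t : ℝ, 0 ≤ B * t ^ 2 := fun t => mul_nonneg hB0 (sq_nonneg t)
  linarith [j a, j b, j c, j d, j f, j g, sq_nonneg a, sq_nonneg b, sq_nonneg c, sq_nonneg d,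
    sq_nonneg f, sq_nonneg g]

theorem symmGradSq_combination_vpull_le {η ρ σ : ℝ → ℝ} (hη : ContDiff ℝ (⊤ : ℕ∞) η)
    (hρ : ContDiff ℝ (⊤ : ℕ∞) ρ)
    (hη' : ∀ y, HasDerivAt η (ρ y) y) (hρ' : ∀ y, HasDerivAt ρ (σ y) y)
    {u : ℝ × ℝ → ℝ × ℝ} (hu : ContDiff ℝ (⊤ : ℕ∞) u) {s t q r : ℝ} {p : ℝ × ℝ}
    (hs0 : 0 ≤ 1 - s * ρ p.2) (hs1 : 1 - s * ρ p.2 ≤ 1)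
    (ht0 : 0 ≤ 1 - t * ρ p.2) (ht1 : 1 - t * ρ p.2 ≤ 1) (hqr : q * s + r * t = 0) :
    symmGradSq (fun p => q • vpull η ρ u s p + r • vpull η ρ u t p) p ≤
      3 * q ^ 2 * symmGradSq u (vshift η s p) + 3 * r ^ 2 * symmGradSq u (vshift η t p) +
      3 * (q * s * σ p.2) ^ 2 * ((u (vshift η s p)).2 - (u (vshift η t p)).2) ^ 2 := by
  obtain ⟨e1, e2⟩ := fderiv_vpull hη hρ hη' hρ' hu s p
  obtain ⟨e3, e4⟩ := fderiv_vpull hη hρ hη' hρ' hu t p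
  have hs := contDiff_vpull hη hρ hu s
  have ht := contDiff_vpull hη hρ hu t
  unfold symmGradSq
  rw [fderiv_smul_add_smul hs ht, fderiv_smul_add_smul hs ht, e1, e2, e3, e4]
  simp only [Prod.fst_add, Prod.snd_add, Prod.smul_fst, Prod.smul_snd, smul_eq_mul]
  set m := 1 - s * ρ p.2
  set n := 1 - t * ρ p.2
  have hm2 : m ^ 2 ≤ 1 := pow_le_one₀ hs0 hs1
  have hm4 : (m ^ 2) ^ 2 ≤ 1 := pow_le_one₀ (sq_nonneg m) hm2
  have hn2 : n ^ 2 ≤ 1 := pow_le_one₀ ht0 ht1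
  have hn4 : (n ^ 2) ^ 2 ≤ 1 := pow_le_one₀ (sq_nonneg n) hn2
  have hr : r * t = -(q * s) := by linarith
  generalize (fderiv ℝ u (vshift η s p) (1, 0)).1 = a
  generalize (fderiv ℝ u (vshift η s p) (1, 0)).2 = b
  generalize (fderiv ℝ u (vshift η s p) (0, 1)).1 = c
  generalize (fderiv ℝ u (vshift η s p) (0, 1)).2 = d
  generalize (u (vshift η s p)).2 = g
  generalize (fderiv ℝ u (vshift η t p) (1, 0)).1 = a'
  generalize (fderiv ℝ u (vshift η t p) (1, 0)).2 = b'
  generalize (fderiv ℝ u (vshift η t p) (0, 1)).1 = c'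
  generalize (fderiv ℝ u (vshift η t p) (0, 1)).2 = d'
  generalize (u (vshift η t p)).2 = g'
  have k1 : (q * a + r * a') ^ 2 ≤ 3 * q ^ 2 * a ^ 2 + 3 * r ^ 2 * a' ^ 2 := by
    nlinarith [sq_nonneg (q * a - r * a'), sq_nonneg (q * a), sq_nonneg (r * a')]
  have k2 : ((q * (m * b) + r * (n * b') + (q * (m * c) + r * (n * c'))) / 2) ^ 2 ≤
      3 * q ^ 2 * ((b + c) / 2) ^ 2 + 3 * r ^ 2 * ((b' + c') / 2) ^ 2 := by
    have i1 : m ^ 2 * (q * ((b + c) / 2)) ^ 2 ≤ (q * ((b + c) / 2)) ^ 2 :=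
      mul_le_of_le_one_left (sq_nonneg _) hm2
    have i2 : n ^ 2 * (r * ((b' + c') / 2)) ^ 2 ≤ (r * ((b' + c') / 2)) ^ 2 :=
      mul_le_of_le_one_left (sq_nonneg _) hn2
    have e : (q * (m * b) + r * (n * b') + (q * (m * c) + r * (n * c'))) / 2 =
        m * (q * ((b + c) / 2)) + n * (r * ((b' + c') / 2)) := by ring
    rw [e]
    generalize (b + c) / 2 = x at *
    generalize (b' + c') / 2 = y at *
    linarith [add_sq_le (a := m * (q * x)) (b := n * (r * y)), mul_pow m (q * x) 2,
      mul_pow n (r * y) 2, mul_pow q x 2, mul_pow r y 2, sq_nonneg (q * x), sq_nonneg (r * y)]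
  have k3 : (q * (m ^ 2 * d - s * σ p.2 * g) + r * (n ^ 2 * d' - t * σ p.2 * g')) ^ 2 ≤
      3 * q ^ 2 * d ^ 2 + 3 * r ^ 2 * d' ^ 2 + 3 * (q * s * σ p.2) ^ 2 * (g - g') ^ 2 := by
    have e : q * (m ^ 2 * d - s * σ p.2 * g) + r * (n ^ 2 * d' - t * σ p.2 * g') =
        m ^ 2 * (q * d) + n ^ 2 * (r * d') + -(q * s * σ p.2 * (g - g')) := by
      linear_combination (-σ p.2 * g') * hr
    have i1 : (m ^ 2) ^ 2 * (q * d) ^ 2 ≤ (q * d) ^ 2 :=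
      mul_le_of_le_one_left (sq_nonneg _) hm4
    have i2 : (n ^ 2) ^ 2 * (r * d') ^ 2 ≤ (r * d') ^ 2 :=
      mul_le_of_le_one_left (sq_nonneg _) hn4
    have tri : ∀ x y z : ℝ, (x + y + z) ^ 2 ≤ 3 * x ^ 2 + 3 * y ^ 2 + 3 * z ^ 2 := fun x y z => by
      nlinarith [sq_nonneg (x - y), sq_nonneg (x - z), sq_nonneg (y - z)]
    rw [e]
    refine (tri _ _ _).trans ?_
    rw [neg_sq, mul_pow (m ^ 2), mul_pow (n ^ 2), mul_pow (q * s * σ p.2)]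
    linarith [mul_pow q d 2, mul_pow r d' 2]
  linarith

theorem lintegral_comp_vshift_le {η ρ : ℝ → ℝ} (hη' : ∀ y, HasDerivAt η (ρ y) y)
    {s c : ℝ} (hc : 0 < c) (hcs : ∀ y, c ≤ 1 - s * ρ y)
    {F : ℝ × ℝ → ENNReal} (hF : Measurable F) :
    ∫⁻ p, F (vshift η s p) ≤ ENNReal.ofReal c⁻¹ * ∫⁻ p, F p :=
  lintegral_comp_snd_le (g := fun y => y - s * η y) hc
    (fun y => (hasDerivAt_id y).sub ((hη' y).const_mul s)) hcs hF

set_option maxHeartbeats 1000000 in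
/-- Extension of fields from a layer to a higher one, unchanged below level `a`, with control of
the symmetric gradient. -/
theorem exists_extension_symmGradSq_le {ω : ℝ → ℝ} (hω : Continuous ω) {m M a Y Z : ℝ}
    (hm : ∀ t, m ≤ ω t) (hM : ∀ t, ω t ≤ M) (hMa : M < a) (haY : a < Y) (hYZ : Y < Z) :
    ∃ C : NNReal, ∀ u : ℝ × ℝ → ℝ × ℝ, ContDiff ℝ (⊤ : ℕ∞) u →
      ∫⁻ p in layerRY ω Y, ENNReal.ofReal (vsq (u p) + gradSq u p) ≠ ⊤ →
      ∃ v : ℝ × ℝ → ℝ × ℝ, ContDiff ℝ (⊤ : ℕ∞) v ∧ (∀ p : ℝ × ℝ, p.2 ≤ a → v p = u p) ∧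
        ∫⁻ p in layerRY ω Z, ENNReal.ofReal (vsq (v p) + gradSq v p) ≠ ⊤ ∧
        ∫⁻ p in layerRY ω Z, ENNReal.ofReal (symmGradSq v p) ≤
          C * ∫⁻ p in layerRY ω Y, ENNReal.ofReal (symmGradSq u p) := by
  set b := (a + Y) / 2 with hb
  have hab : a < b := by linarith
  have hbY : b < Y := by linarith
  set θ := (Z - Y) / (Z - b) with hθdef
  have hZb : 0 < Z - b := by linarith
  have hθ0 : 0 < θ := div_pos (by linarith) hZb
  have hθ1 : θ < 1 := (div_lt_one hZb).2 (by linarith)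
  obtain ⟨η, ρ, σ, hη, hρ, hσ, hη', hρ', hρ0, hρθ, hηa, hρa, hηb⟩ :=
    exists_smooth_ramp hab hθ0.le
  set l := (1 + 1 / θ) / 2 with hl
  have hinv : 1 < 1 / θ := (one_lt_div hθ0).2 hθ1
  have hl1 : 1 < l := by linarith
  have hlθ : l * θ = (1 + θ) / 2 := by rw [hl]; field_simp; ring
  set c := (1 - θ) / 2 with hcdef
  have hc : 0 < c := by linarith
  have hslope : ∀ s ∈ Icc 1 l, ∀ y, c ≤ 1 - s * ρ y ∧ 1 - s * ρ y ≤ 1 := by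
    rintro s ⟨hs1, hs2⟩ y
    have : s * ρ y ≤ l * θ := mul_le_mul hs2 (hρθ y) (hρ0 y) (by linarith)
    exact ⟨by linarith, by linarith [mul_nonneg (zero_le_one.trans hs1) (hρ0 y)]⟩
  have hηmono : Monotone η := monotone_of_hasDerivAt_nonneg hη' hρ0
  have hηnn : ∀ y, 0 ≤ η y := fun y => by
    rcases le_total y a with h | h
    · rw [hηa y h]
    · rw [← hηa a le_rfl]; exact hηmono h
  have hηZ : Z - Y ≤ η Z := by
    have := hηb Z (by linarith)
    rwa [hθdef, div_mul_cancel₀ _ hZb.ne'] at this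
  have hgmono : ∀ s ∈ Icc 1 l, StrictMono fun y => y - s * η y := fun s hs =>
    strictMono_of_hasDerivAt_pos (fun y => (hasDerivAt_id y).sub ((hη' y).const_mul s))
      fun y => hc.trans_le (hslope s hs y).1
  have hmaps : ∀ s ∈ Icc 1 l, MapsTo (vshift η s) (layerRY ω Z) (layerRY ω Y) := by
    rintro s hs p ⟨hp1, hp2⟩
    refine ⟨?_, ?_⟩
    · simp only [vshift]
      rcases le_total p.2 a with h | h
      · rw [hηa _ h]; simpa using hp1
      · have := (hgmono s hs).monotone h
        simp only [hηa a le_rfl, mul_zero, sub_zero] at this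
        linarith [hM p.1]
    · have := hgmono s hs hp2
      simp only [vshift] at this ⊢
      nlinarith [hs.1, hηnn Z]
  obtain ⟨B, hB⟩ := (isCompact_Icc (a := m) (b := Z)).exists_bound_of_continuousOn
    (f := fun y => max |η y| |σ y|) (by
      have := hη.continuous
      exact Continuous.continuousOn (by fun_prop))
  have hB' : ∀ p ∈ layerRY ω Z, η p.2 ^ 2 ≤ B ^ 2 ∧ σ p.2 ^ 2 ≤ B ^ 2 := by
    rintro p ⟨hp1, hp2⟩
    have h := (le_abs_self _).trans (hB p.2 ⟨(hm p.1).trans hp1.le, hp2.le⟩)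
    exact ⟨sq_le_sq' (by linarith [(abs_le.1 ((le_max_left _ _).trans h)).1])
      (abs_le.1 ((le_max_left _ _).trans h)).2,
      sq_le_sq' (by linarith [(abs_le.1 ((le_max_right _ _).trans h)).1])
      (abs_le.1 ((le_max_right _ _).trans h)).2⟩
  have hS := (isOpen_layerRY hω Z).measurableSet
  have hT := (isOpen_layerRY hω Y).measurableSet
  have h1mem : (1 : ℝ) ∈ Icc 1 l := ⟨le_rfl, hl1.le⟩
  have hlmem : l ∈ Icc 1 l := ⟨hl1.le, le_rfl⟩
  have hl0 : l - 1 ≠ 0 := by linarith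
  set q := l / (l - 1) with hq
  set r := -(1 / (l - 1)) with hr
  have hqr1 : q + r = 1 := by rw [hq, hr]; field_simp; ring
  have hqr0 : q * 1 + r * l = 0 := by rw [hq, hr]; field_simp; ring
  set κ := ENNReal.ofReal c⁻¹ with hκ
  set A := 3 * (q * B) ^ 2 * ((l - 1) * B) ^ 2 with hA
  refine ⟨(3 * q ^ 2 * c⁻¹ + 3 * r ^ 2 * c⁻¹ + A * c⁻¹).toNNReal, fun u hu hfin => ?_⟩
  set v : ℝ × ℝ → ℝ × ℝ := fun p => q • vpull η ρ u 1 p + r • vpull η ρ u l p with hv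
  have hw1 := contDiff_vpull hη hρ hu 1
  have hwl := contDiff_vpull hη hρ hu l
  have hH : Measurable fun p => ENNReal.ofReal (vsq (u p) + gradSq u p) :=
    ((continuous_vsq_comp hu).add (continuous_gradSq hu)).measurable.ennreal_ofReal
  have hE : Measurable fun p => ENNReal.ofReal (symmGradSq u p) :=
    (continuous_symmGradSq hu).measurable.ennreal_ofReal
  have hshift : ∀ s, Continuous (vshift η s) := fun s => by
    have := hη.continuous
    unfold vshift; fun_prop
  have hcv : ∀ s ∈ Icc 1 l, ∀ F : ℝ × ℝ → ENNReal, Measurable F →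
      ∫⁻ p, F (vshift η s p) ≤ κ * ∫⁻ p, F p := fun s hs F hF =>
    lintegral_comp_vshift_le hη' hc (fun y => (hslope s hs y).1) hF
  refine ⟨v, (hw1.const_smul q).add (hwl.const_smul r), ?_, ?_, ?_⟩
  · intro p hp
    have e : ∀ s, vpull η ρ u s p = u p := fun s => by
      simp [vpull, vshift, hηa _ hp, hρa _ hp]
    simp only [hv, e]
    rw [← add_smul, hqr1, one_smul]
  · have hpt : ∀ p ∈ layerRY ω Z, ENNReal.ofReal (vsq (v p) + gradSq v p) ≤
        ENNReal.ofReal (2 * q ^ 2 * (2 + 2 * (l ^ 2 * B ^ 2))) *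
          ENNReal.ofReal (vsq (u (vshift η 1 p)) + gradSq u (vshift η 1 p)) +
        ENNReal.ofReal (2 * r ^ 2 * (2 + 2 * (l ^ 2 * B ^ 2))) *
          ENNReal.ofReal (vsq (u (vshift η l p)) + gradSq u (vshift η l p)) := by
      intro p hp
      have hn : ∀ y, 0 ≤ vsq (u y) + gradSq u y := fun y =>
        add_nonneg (vsq_nonneg _) (gradSq_nonneg _ _)
      have hw : ∀ s ∈ Icc 1 l, vsq (vpull η ρ u s p) + gradSq (vpull η ρ u s) p ≤
          (2 + 2 * (l ^ 2 * B ^ 2)) * (vsq (u (vshift η s p)) + gradSq u (vshift η s p)) :=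
        fun s hs => vsq_add_gradSq_vpull_le hη hρ hη' hρ' hu
          (hc.le.trans (hslope s hs p.2).1) (hslope s hs p.2).2 (by
            rw [mul_pow]
            have := (hB' p hp).2
            have h0 : 0 ≤ s := zero_le_one.trans hs.1
            have := hs.2
            gcongr)
      rw [← ENNReal.ofReal_mul (by positivity), ← ENNReal.ofReal_mul (by positivity),
        ← ENNReal.ofReal_add (mul_nonneg (by positivity) (hn _))
          (mul_nonneg (by positivity) (hn _))]
      apply ENNReal.ofReal_le_ofReal
      have i1 := mul_le_mul_of_nonneg_left (hw 1 h1mem) (by positivity : 0 ≤ 2 * q ^ 2)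
      have i2 := mul_le_mul_of_nonneg_left (hw l hlmem) (by positivity : 0 ≤ 2 * r ^ 2)
      have i3 := vsq_smul_add_smul_le q r (vpull η ρ u 1 p) (vpull η ρ u l p)
      have i4 := gradSq_smul_add_smul_le hw1 hwl q r p
      rw [mul_assoc (2 * q ^ 2), mul_assoc (2 * r ^ 2)]
      linarith
    have hHs : ∀ s, Measurable fun p =>
        ENNReal.ofReal (vsq (u (vshift η s p)) + gradSq u (vshift η s p)) := fun s =>
      hH.comp (hshift s).measurable
    have hHfin : ∀ s ∈ Icc 1 l, ∫⁻ p in layerRY ω Z,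
        ENNReal.ofReal (vsq (u (vshift η s p)) + gradSq u (vshift η s p)) ≠ ⊤ := fun s hs =>
      ne_top_of_le_ne_top (ENNReal.mul_ne_top ENNReal.ofReal_ne_top hfin)
        (setLIntegral_comp_le hS hT (hcv s hs) (hmaps s hs) hH)
    refine ne_top_of_le_ne_top ?_ (setLIntegral_mono' hS hpt)
    rw [lintegral_add_left ((hHs 1).const_mul _), lintegral_const_mul _ (hHs 1),
      lintegral_const_mul _ (hHs l)]
    exact ENNReal.add_ne_top.2 ⟨ENNReal.mul_ne_top ENNReal.ofReal_ne_top (hHfin 1 h1mem),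
      ENNReal.mul_ne_top ENNReal.ofReal_ne_top (hHfin l hlmem)⟩
  · let Φ : ℝ → ℝ × ℝ → ℝ × ℝ := fun τ => vshift η (l - τ * (l - 1))
    have hΦmem : ∀ τ ∈ Icc (0 : ℝ) 1, l - τ * (l - 1) ∈ Icc 1 l := by
      rintro τ ⟨h0, h1⟩
      constructor <;> nlinarith
    have hΦ : Continuous (Function.uncurry Φ) := by
      have := hη.continuous
      simp only [Φ, vshift, Function.uncurry_def]; fun_prop
    have hpath : ∀ p, ENNReal.ofReal (((u (vshift η 1 p)).2 - (u (vshift η l p)).2) ^ 2) ≤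
        ENNReal.ofReal (((l - 1) * η p.2) ^ 2) *
          ∫⁻ τ in Icc (0 : ℝ) 1, ENNReal.ofReal (symmGradSq u (Φ τ p)) := by
      intro p
      have hcurve : ∀ τ, HasDerivAt (fun τ => Φ τ p)
          (((l - 1) * η p.2) • ((0, 1) : ℝ × ℝ)) τ := fun τ => by
        have h1 : HasDerivAt (fun τ : ℝ => p.2 - (l - τ * (l - 1)) * η p.2)
            ((l - 1) * η p.2) τ := by
          refine (((((hasDerivAt_id τ).mul_const (l - 1)).const_sub l).mul_const
            (η p.2)).const_sub p.2).congr_deriv ?_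
          ring
        exact ((hasDerivAt_const τ p.1).prodMk h1).congr_deriv (by simp)
      have hΦp : Continuous fun τ => Φ τ p := by simp only [Φ, vshift]; fun_prop
      have hj := sq_sub_le_lintegral_deriv_sq
        (fun τ => hasDerivAt_snd_comp_curve hu (hcurve τ)) (by
          simp only [map_smul]
          have := (continuous_fderiv_apply_of_smooth hu (0, 1)).comp hΦp
          simp only [Function.comp_def] at this
          fun_prop)
      have e1 : Φ 1 p = vshift η 1 p := by simp only [Φ]; congr 1; ring
      have e0 : Φ 0 p = vshift η l p := by simp only [Φ]; congr 1; ring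
      rw [e1, e0] at hj
      refine hj.trans ?_
      rw [← lintegral_const_mul' _ _ ENNReal.ofReal_ne_top]
      refine lintegral_mono fun τ => ?_
      rw [← ENNReal.ofReal_mul (by positivity)]
      apply ENNReal.ofReal_le_ofReal
      rw [map_smul, Prod.smul_snd, smul_eq_mul, mul_pow]
      gcongr
      unfold symmGradSq
      nlinarith [sq_nonneg (fderiv ℝ u (Φ τ p) (1, 0)).1,
        sq_nonneg (((fderiv ℝ u (Φ τ p) (1, 0)).2 + (fderiv ℝ u (Φ τ p) (0, 1)).1) / 2)]
    have hpt : ∀ p ∈ layerRY ω Z, ENNReal.ofReal (symmGradSq v p) ≤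
        ENNReal.ofReal (3 * q ^ 2) * ENNReal.ofReal (symmGradSq u (vshift η 1 p)) +
        ENNReal.ofReal (3 * r ^ 2) * ENNReal.ofReal (symmGradSq u (vshift η l p)) +
        ENNReal.ofReal A * ∫⁻ τ in Icc (0 : ℝ) 1, ENNReal.ofReal (symmGradSq u (Φ τ p)) := by
      intro p hp
      have hmain := symmGradSq_combination_vpull_le hη hρ hη' hρ' hu
        (hc.le.trans (hslope 1 h1mem p.2).1) (hslope 1 h1mem p.2).2
        (hc.le.trans (hslope l hlmem p.2).1) (hslope l hlmem p.2).2 hqr0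
      have h1 : 0 ≤ 3 * q ^ 2 * symmGradSq u (vshift η 1 p) :=
        mul_nonneg (by positivity) (symmGradSq_nonneg _ _)
      have h2 : 0 ≤ 3 * r ^ 2 * symmGradSq u (vshift η l p) :=
        mul_nonneg (by positivity) (symmGradSq_nonneg _ _)
      refine (ENNReal.ofReal_le_ofReal hmain).trans ?_
      rw [ENNReal.ofReal_add (add_nonneg h1 h2) (by positivity), ENNReal.ofReal_add h1 h2,
        ENNReal.ofReal_mul (p := 3 * q ^ 2) (by positivity),
        ENNReal.ofReal_mul (p := 3 * r ^ 2) (by positivity),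
        ENNReal.ofReal_mul (p := 3 * (q * 1 * σ p.2) ^ 2) (by positivity)]
      refine add_le_add le_rfl ((mul_le_mul_right (hpath p) _).trans ?_)
      rw [← mul_assoc, ← ENNReal.ofReal_mul (by positivity)]
      refine mul_le_mul_left (ENNReal.ofReal_le_ofReal ?_) _
      obtain ⟨hb1, hb2⟩ := hB' p hp
      rw [hA, mul_one, mul_pow q, mul_pow q, mul_pow (l - 1), mul_pow (l - 1)]
      gcongr
    have hEs : ∀ s, Measurable fun p => ENNReal.ofReal (symmGradSq u (vshift η s p)) :=
      fun s => hE.comp (hshift s).measurable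
    set J := ∫⁻ p in layerRY ω Y, ENNReal.ofReal (symmGradSq u p)
    have hJs : ∀ s ∈ Icc 1 l, ∫⁻ p in layerRY ω Z,
        ENNReal.ofReal (symmGradSq u (vshift η s p)) ≤ κ * J := fun s hs =>
      setLIntegral_comp_le hS hT (hcv s hs) (hmaps s hs) hE
    have hJpath : ∫⁻ p in layerRY ω Z, ∫⁻ τ in Icc (0 : ℝ) 1,
        ENNReal.ofReal (symmGradSq u (Φ τ p)) ≤ κ * J :=
      setLIntegral_path_le hS hT hΦ (fun τ hτ => hcv _ (hΦmem τ hτ))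
        (fun τ hτ => hmaps _ (hΦmem τ hτ)) hE
    refine (setLIntegral_mono' hS hpt).trans ?_
    have hE1l : Measurable fun p =>
        ENNReal.ofReal (3 * q ^ 2) * ENNReal.ofReal (symmGradSq u (vshift η 1 p)) +
        ENNReal.ofReal (3 * r ^ 2) * ENNReal.ofReal (symmGradSq u (vshift η l p)) :=
      ((hEs 1).const_mul _).add ((hEs l).const_mul _)
    rw [lintegral_add_left hE1l,
      lintegral_add_left ((hEs 1).const_mul _), lintegral_const_mul _ (hEs 1),
      lintegral_const_mul _ (hEs l), lintegral_const_mul' _ _ ENNReal.ofReal_ne_top]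
    refine (add_le_add (add_le_add (mul_le_mul_right (hJs 1 h1mem) _)
      (mul_le_mul_right (hJs l hlmem) _)) (mul_le_mul_right hJpath _)).trans_eq ?_
    have e : ((3 * q ^ 2 * c⁻¹ + 3 * r ^ 2 * c⁻¹ + A * c⁻¹).toNNReal : ENNReal) =
        ENNReal.ofReal (3 * q ^ 2) * κ + ENNReal.ofReal (3 * r ^ 2) * κ +
          ENNReal.ofReal A * κ := by
      rw [hκ, ← ENNReal.ofReal_mul (by positivity), ← ENNReal.ofReal_mul (by positivity),
        ← ENNReal.ofReal_mul (by positivity), ← ENNReal.ofReal_add (by positivity) (by positivity),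
        ← ENNReal.ofReal_add (by positivity) (by positivity)]
      rfl
    rw [e]
    ring

theorem LKornProp.mono {ω : ℝ → ℝ} (hω : Continuous ω) {M Z Y : ℝ}
    (hM : ∀ t, ω t ≤ M) (hMZ : M < Z) (hZY : Z ≤ Y) (h : LKornProp ω Z) : LKornProp ω Y := by
  obtain ⟨C, hC⟩ := h
  obtain ⟨C', hC'⟩ := setLIntegral_vsq_layer_le hω hM hMZ hZY
  refine ⟨C' * (C + 1), fun u hu hfin htan => (hC' u hu).trans ?_⟩
  have hsub : layerRY ω Z ⊆ layerRY ω Y := fun p hp => ⟨hp.1, hp.2.trans_le hZY⟩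
  have hI := hC u hu (ne_top_of_le_ne_top hfin (lintegral_mono_set hsub)) htan
  push_cast
  rw [mul_assoc, add_mul, one_mul]
  refine mul_le_mul_right (add_le_add (hI.trans ?_) le_rfl) _
  exact mul_le_mul_right (lintegral_mono_set hsub) _

theorem LKornProp.anti {ω : ℝ → ℝ} (hω : Continuous ω) {m M Y Z : ℝ} (hm : ∀ t, m ≤ ω t)
    (hM : ∀ t, ω t ≤ M) (hMY : M < Y) (hYZ : Y < Z) (h : LKornProp ω Z) : LKornProp ω Y := by
  obtain ⟨C, hC⟩ := h
  obtain ⟨a, hMa, haY⟩ := exists_between hMY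
  obtain ⟨C₁, hC₁⟩ := setLIntegral_vsq_layer_le hω hM hMa haY.le
  obtain ⟨C₂, hC₂⟩ := exists_extension_symmGradSq_le hω hm hM hMa haY hYZ
  refine ⟨C₁ * (C * C₂ + 1), fun u hu hfin htan => (hC₁ u hu).trans ?_⟩
  obtain ⟨v, hv, hvu, hvfin, hvsymm⟩ := hC₂ u hu hfin
  have htanv : TangentOn ω v := by
    filter_upwards [htan] with x hx
    rwa [hvu (x, ω x) ((hM x).trans hMa.le)]
  have hI : ∫⁻ p in layerRY ω a, ENNReal.ofReal (vsq (u p)) ≤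
      ∫⁻ p in layerRY ω Z, ENNReal.ofReal (vsq (v p)) :=
    (setLIntegral_mono' (isOpen_layerRY hω a).measurableSet fun p hp => by
      rw [hvu p hp.2.le]).trans
      (lintegral_mono_set fun p hp => ⟨hp.1, hp.2.trans (haY.trans hYZ)⟩)
  push_cast
  rw [mul_assoc, add_mul, one_mul, mul_assoc]
  refine mul_le_mul_right (add_le_add ?_ le_rfl) _
  exact hI.trans ((hC v hv hvfin htanv).trans (mul_le_mul_right hvsymm _))

/-- If `ω` is Lipschitz and bounded and `(K_{Y₀})` holds for some `Y₀ > sup ω`, then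
`(K_Y)` holds for every `Y > sup ω`. -/
theorem stmt9 (ω : ℝ → ℝ) (K : NNReal) (hlip : LipschitzWith K ω)
    (hbdd : ∃ C : ℝ, ∀ t, |ω t| ≤ C)
    (h0 : ∃ Y₀ : ℝ, (⨆ t : ℝ, ω t) < Y₀ ∧ KornProp ω Y₀) :
    ∀ Y : ℝ, (⨆ t : ℝ, ω t) < Y → KornProp ω Y := by
  intro Y hY
  obtain ⟨B, hB⟩ := hbdd
  obtain ⟨Y₀, hY₀, hK⟩ := h0
  have hM : ∀ t, ω t ≤ ⨆ t, ω t := fun t =>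
    le_ciSup ⟨B, by rintro _ ⟨t, rfl⟩; exact (abs_le.1 (hB t)).2⟩ t
  rw [kornProp_iff_lKornProp] at hK ⊢
  rcases le_or_gt Y₀ Y with h | h
  · exact hK.mono hlip.continuous hM hY₀ h
  · exact hK.anti hlip.continuous (fun t => (abs_le.1 (hB t)).1) hM hY h
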